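/- Let A, B, C be a maximal positive solution of the SU(2) negative cross curvature flow ODE system with A_0 ≥ B_0 ≥ C_0 > 0. Then d(A^2)/dt ≤ -4 C_0^2/A_0^2 along the solution, so there is a finite time T_0 > 0 at which the solution ceases to exist with A(t), B(t), C(t) → 0 as t → T_0^-; moreover, for all t ∈ [0, T_0), sqrt(48(T_0 - t)) · A_0^2/C_0^2 ≥ A(t) ≥ 2 sqrt(T_0 - t) · C_0/A_0. -/

import Mathlib

/-!
The flow preserves the cone `C ≤ B ≤ A ≤ r C` with `r = A0 / C0`: `A - B` and `B - C` solve scalar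
linear equations, so they keep their sign, and `A / C` is then nonincreasing because `Y ≤ 0`. On
this cone `C² ≤ -Y, -Z ≤ 3A²`, so that `(A²)' = -4 Y Z / (B C)²` lies between `-36 r⁴` and
`-4 / r²`.

The upper bound makes the lifespan finite. If `A` stayed above some `e > 0`, the solution would stay
in the cube `[e / r, A0]³`, a compact set of positive triples, and could be continued past the final
time by Picard–Lindelöf. Hence `A → 0`, and integrating the bounds on `(A²)'` up to the final time
gives the two estimates.
-/

/-- The quantity `X = 3A² - (B-C)² - 2AB - 2AC` of the `SU(2)` cross curvature tensor. -/
def su2X (A B C : ℝ) : ℝ := 3 * A ^ 2 - (B - C) ^ 2 - 2 * A * B - 2 * A * C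

/-- The quantity `Y = 3B² - (A-C)² - 2AB - 2BC` of the `SU(2)` cross curvature tensor. -/
def su2Y (A B C : ℝ) : ℝ := 3 * B ^ 2 - (A - C) ^ 2 - 2 * A * B - 2 * B * C

/-- The quantity `Z = 3C² - (A-B)² - 2BC - 2AC` of the `SU(2)` cross curvature tensor. -/
def su2Z (A B C : ℝ) : ℝ := 3 * C ^ 2 - (A - B) ^ 2 - 2 * B * C - 2 * A * C

/-- A triple of functions solves the `SU(2)` negative cross curvature flow ODE system
(with positivity) on a set `s ⊆ ℝ`. -/
def IsSolSU2 (A B C : ℝ → ℝ) (s : Set ℝ) : Prop :=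
  ∀ t ∈ s,
    (0 < A t ∧ 0 < B t ∧ 0 < C t) ∧
    HasDerivAt A
      (-2 * A t * su2Y (A t) (B t) (C t) * su2Z (A t) (B t) (C t) /
        (A t * B t * C t) ^ 2) t ∧
    HasDerivAt B
      (-2 * B t * su2Z (A t) (B t) (C t) * su2X (A t) (B t) (C t) /
        (A t * B t * C t) ^ 2) t ∧
    HasDerivAt C
      (-2 * C t * su2X (A t) (B t) (C t) * su2Y (A t) (B t) (C t) /
        (A t * B t * C t) ^ 2) t

/-- A maximal solution of the `SU(2)` system on `{t | 0 ≤ t, t < T}` (`T ∈ (0,∞]` an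
extended real): it is a solution that admits no extension to a strictly larger interval. -/
def IsMaxSolSU2 (A B C : ℝ → ℝ) (T : EReal) : Prop :=
  IsSolSU2 A B C {t : ℝ | 0 ≤ t ∧ (t : EReal) < T} ∧
  ∀ (A' B' C' : ℝ → ℝ) (T' : EReal), T < T' →
    IsSolSU2 A' B' C' {t : ℝ | 0 ≤ t ∧ (t : EReal) < T'} →
    ¬ (∀ t : ℝ, 0 ≤ t → (t : EReal) < T → A' t = A t ∧ B' t = B t ∧ C' t = C t)

open Filter Set
open scoped Topology

section RealFunctions

theorem nonneg_of_abs_deriv_le_mul_abs {f f' : ℝ → ℝ} {K a b : ℝ} (hab : a ≤ b)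
    (hf : ContinuousOn f (Icc a b)) (hf' : ∀ x ∈ Ico a b, HasDerivWithinAt f (f' x) (Ici x) x)
    (hbound : ∀ x ∈ Ico a b, |f' x| ≤ K * |f x|) (ha : 0 ≤ f a) : 0 ≤ f b := by
  by_contra! hb
  obtain ⟨c, hc, hfc⟩ : ∃ c ∈ Icc a b, f c = 0 := intermediate_value_Icc' hab hf ⟨hb.le, ha⟩
  have hsub : Ico c b ⊆ Ico a b := Ico_subset_Ico_left hc.1
  have hfb : f b = 0 :=
    eq_zero_of_abs_deriv_le_mul_abs_self_of_eq_zero_right (hf.mono (Icc_subset_Icc_left hc.1))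
      (fun x hx => hf' x (hsub hx)) hfc (fun x hx => hbound x (hsub hx)) b ⟨hc.2, le_rfl⟩
  exact hb.ne hfb

theorem nonneg_of_hasDerivAt_mul_self {u k : ℝ → ℝ} {a b : ℝ} (hab : a ≤ b)
    (hk : ContinuousOn k (Icc a b)) (hu : ∀ t ∈ Icc a b, HasDerivAt u (k t * u t) t)
    (ha : 0 ≤ u a) : 0 ≤ u b := by
  obtain ⟨K, hK⟩ := isCompact_Icc.exists_bound_of_continuousOn hk
  refine nonneg_of_abs_deriv_le_mul_abs (K := K) hab (HasDerivAt.continuousOn hu)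
    (fun t ht => (hu t (Ico_subset_Icc_self ht)).hasDerivWithinAt) (fun t ht => ?_) ha
  rw [abs_mul]
  gcongr
  exact hK t (Ico_subset_Icc_self ht)

theorem tendsto_nhdsLT_of_antitoneOn_of_forall_exists_lt {f : ℝ → ℝ} {a b l : ℝ} (hab : a < b)
    (hf : AntitoneOn f (Ico a b)) (hl : ∀ t ∈ Ico a b, l ≤ f t)
    (hlt : ∀ e > l, ∃ t ∈ Ico a b, f t < e) : Tendsto f (𝓝[<] b) (𝓝 l) := by
  refine tendsto_order.2 ⟨fun e he => ?_, fun e he => ?_⟩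
  · filter_upwards [Ico_mem_nhdsLT hab] with t ht using he.trans_le (hl t ht)
  · obtain ⟨t, ht, hte⟩ := hlt e he
    filter_upwards [Ico_mem_nhdsLT ht.2] with x hx
    exact (hf ht ⟨ht.1.trans hx.1, hx.2⟩ hx.1).trans_lt hte

end RealFunctions

section Continuation

variable {E : Type*} [NormedAddCommGroup E] [NormedSpace ℝ E] {F : E → E} {γ : ℝ → E} {a b : ℝ}

theorem exists_tendsto_nhdsLT_of_norm_deriv_le [CompleteSpace E] {γ' : ℝ → E} {M : ℝ}
    (hab : a < b) (hγ : ∀ t ∈ Ico a b, HasDerivAt γ (γ' t) t)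
    (hM : ∀ t ∈ Ico a b, ‖γ' t‖ ≤ M) : ∃ p, Tendsto γ (𝓝[<] b) (𝓝 p) := by
  have hlip : LipschitzOnWith M.toNNReal γ (Ico a b) :=
    (convex_Ico a b).lipschitzOnWith_of_nnnorm_hasDerivWithin_le
      (fun t ht => (hγ t ht).hasDerivWithinAt)
      (fun t ht => NNReal.le_toNNReal_of_coe_le (hM t ht))
  have hcauchy : Cauchy (map γ (𝓝[<] b)) :=
    (cauchy_nhds.mono nhdsWithin_le_nhds).map_of_le hlip.uniformContinuousOn
      (le_principal_iff.2 (Ico_mem_nhdsLT hab))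
  exact cauchy_map_iff_exists_tendsto.1 hcauchy

theorem exists_mem_tendsto_nhdsLT_of_isCompact [CompleteSpace E] {K : Set E} (hab : a < b)
    (hK : IsCompact K) (hF : ContinuousOn F K)
    (hγ : ∀ t ∈ Ico a b, HasDerivAt γ (F (γ t)) t) (hγK : MapsTo γ (Ico a b) K) :
    ∃ p ∈ K, Tendsto γ (𝓝[<] b) (𝓝 p) := by
  obtain ⟨M, hM⟩ := hK.exists_bound_of_continuousOn hF
  obtain ⟨p, hp⟩ := exists_tendsto_nhdsLT_of_norm_deriv_le hab hγ fun t ht => hM _ (hγK ht)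
  exact ⟨p, hK.isClosed.mem_of_tendsto hp (mem_of_superset (Ico_mem_nhdsLT hab) hγK), hp⟩

theorem hasDerivAt_of_hasDerivWithinAt_Ici_of_tendsto_nhdsLT (hab : a < b)
    (hγ : ∀ t ∈ Ico a b, HasDerivAt γ (F (γ t)) t) (hF : ContinuousAt F (γ b))
    (hleft : Tendsto γ (𝓝[<] b) (𝓝 (γ b)))
    (hright : HasDerivWithinAt γ (F (γ b)) (Ici b) b) : HasDerivAt γ (F (γ b)) b := by
  have hderiv : Tendsto (deriv γ) (𝓝[<] b) (𝓝 (F (γ b))) :=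
    (hF.tendsto.comp hleft).congr' <| by
      filter_upwards [Ico_mem_nhdsLT hab] with t ht using (hγ t ht).deriv.symm
  have hIic : HasDerivWithinAt γ (F (γ b)) (Iic b) b :=
    hasDerivWithinAt_Iic_of_tendsto_deriv (s := Ico a b)
      (fun t ht => (hγ t ht).differentiableAt.differentiableWithinAt)
      (hleft.mono_left (nhdsWithin_mono _ Ico_subset_Iio_self)) (Ico_mem_nhdsLT hab) hderiv
  simpa only [Iic_union_Ici, hasDerivWithinAt_univ] using hIic.union hright

theorem hasDerivAt_piecewise_Iio {α : ℝ → E} {c : ℝ} (hab : a < b)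
    (hγ : ∀ t ∈ Ico a b, HasDerivAt γ (F (γ t)) t) (hγα : Tendsto γ (𝓝[<] b) (𝓝 (α b)))
    (hF : ContinuousAt F (α b)) (hα : ∀ t ∈ Ico b c, HasDerivAt α (F (α t)) t) :
    ∀ t ∈ Ico a c, HasDerivAt ((Iio b).piecewise γ α) (F ((Iio b).piecewise γ α t)) t := by
  set β := (Iio b).piecewise γ α
  have hβγ : EqOn β γ (Iio b) := piecewise_eqOn _ _ _
  have hβα : EqOn β α (Ici b) := by simpa only [compl_Iio] using piecewise_eqOn_compl (Iio b) γ α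
  have hβ : ∀ t ∈ Ico a b, HasDerivAt β (F (β t)) t := fun t ht => by
    rw [hβγ ht.2]
    exact (hγ t ht).congr_of_eventuallyEq (hβγ.eventuallyEq_of_mem (Iio_mem_nhds ht.2))
  intro t ht
  rcases lt_trichotomy t b with htb | rfl | hbt
  · exact hβ t ⟨ht.1, htb⟩
  · have hβt : β t = α t := hβα self_mem_Ici
    refine hasDerivAt_of_hasDerivWithinAt_Ici_of_tendsto_nhdsLT hab hβ (hβt ▸ hF) ?_ ?_
    · exact hβt ▸ hγα.congr' (hβγ.eventuallyEq_of_mem self_mem_nhdsWithin).symm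
    · exact hβt ▸ (hα t ⟨le_rfl, ht.2⟩).hasDerivWithinAt.congr hβα hβt
  · rw [hβα hbt.le]
    exact (hα t ⟨hbt.le, ht.2⟩).congr_of_eventuallyEq (hβα.eventuallyEq_of_mem (Ici_mem_nhds hbt))

theorem exists_extension_of_tendsto_nhdsLT [CompleteSpace E] {p : E} {U : Set E} (hab : a < b)
    (hγ : ∀ t ∈ Ico a b, HasDerivAt γ (F (γ t)) t) (hp : Tendsto γ (𝓝[<] b) (𝓝 p))
    (hF : ContDiffAt ℝ 1 F p) (hU : U ∈ 𝓝 p) :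
    ∃ (β : ℝ → E) (c : ℝ), b < c ∧ EqOn β γ (Iio b) ∧ MapsTo β (Ico b c) U ∧
      ∀ t ∈ Ico a c, HasDerivAt β (F (β t)) t := by
  obtain ⟨α, rfl, ε, hε, hα⟩ :=
    hF.exists_forall_mem_closedBall_exists_eq_forall_mem_Ioo_hasDerivAt₀ b
  have hαU : ∀ᶠ t in 𝓝 b, α t ∈ U := (hα b ⟨by linarith, by linarith⟩).continuousAt hU
  have hαF : ∀ᶠ t in 𝓝 b, HasDerivAt α (F (α t)) t :=
    mem_of_superset (Ioo_mem_nhds (by linarith) (by linarith)) hα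
  obtain ⟨c, hbc, hc⟩ :=
    mem_nhdsGE_iff_exists_Ico_subset.1 (mem_nhdsWithin_of_mem_nhds (hαU.and hαF))
  refine ⟨(Iio b).piecewise γ α, c, hbc, piecewise_eqOn _ _ _, fun t ht => ?_,
    hasDerivAt_piecewise_Iio hab hγ hp hF.continuousAt fun t ht => (hc ht).2⟩
  rw [piecewise_eq_of_notMem _ _ _ (notMem_Iio.2 ht.1)]
  exact (hc ht).1

end Continuation

section Algebra

theorem su2X_rotate (a b c : ℝ) : su2X b c a = su2Y a b c := by
  unfold su2X su2Y; ring

theorem su2Y_rotate (a b c : ℝ) : su2Y b c a = su2Z a b c := by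
  unfold su2Y su2Z; ring

theorem su2Z_rotate (a b c : ℝ) : su2Z b c a = su2X a b c := by
  unfold su2Z su2X; ring

theorem mul_su2Y_sub_mul_su2X (a b c : ℝ) :
    a * su2Y a b c - b * su2X a b c = -((a + b - c) ^ 2 + 4 * a * b) * (a - b) := by
  unfold su2X su2Y; ring

theorem su2X_sub_su2Z (a b c : ℝ) :
    su2X a b c - su2Z a b c = 4 * (a - c) * (a + c - b) := by
  unfold su2X su2Z; ring

variable {r a b c : ℝ}

theorem sq_le_neg_su2Y (hc : 0 ≤ c) (hcb : c ≤ b) (hba : b ≤ a) : c ^ 2 ≤ -su2Y a b c := by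
  have h : 0 ≤ (a - b) * (a + 3 * b - 2 * c) := mul_nonneg (by linarith) (by linarith)
  unfold su2Y
  linarith

theorem sq_le_neg_su2Z (hc : 0 ≤ c) (hcb : c ≤ b) (hba : b ≤ a) : c ^ 2 ≤ -su2Z a b c := by
  have h : 0 ≤ 2 * c * ((b - c) + (a - c)) := mul_nonneg (by linarith) (by linarith)
  unfold su2Z
  linarith [sq_nonneg (a - b)]

theorem neg_su2Y_le (hc : 0 ≤ c) (hcb : c ≤ b) (hba : b ≤ a) : -su2Y a b c ≤ 3 * a ^ 2 := by
  have h₁ : 0 ≤ (a - c) * (a + c) := mul_nonneg (by linarith) (by linarith)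
  have h₂ : 0 ≤ 2 * c * (a - b) := mul_nonneg (by linarith) (by linarith)
  unfold su2Y
  linarith [sq_nonneg (a - b), sq_nonneg b]

theorem neg_su2Z_le (hc : 0 ≤ c) (hcb : c ≤ b) (hba : b ≤ a) : -su2Z a b c ≤ 3 * a ^ 2 := by
  have h₁ : 0 ≤ (a - b) * (a + b) := mul_nonneg (by linarith) (by linarith)
  have h₂ : 0 ≤ 2 * b * (a - c) := mul_nonneg (by linarith) (by linarith)
  unfold su2Z
  linarith [sq_nonneg (a - c), sq_nonneg c]

/-- The cone `c ≤ b ≤ a ≤ r c` of ordered triples whose ratios are at most `r`. It is invariant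
under the flow, and on it the rate of change of `A²` is controlled by `r` alone. -/
structure IsPinched (r a b c : ℝ) : Prop where
  c_le_b : c ≤ b
  b_le_a : b ≤ a
  a_le : a ≤ r * c

namespace IsPinched

theorem one_le (h : IsPinched r a b c) (hc : 0 < c) : 1 ≤ r :=
  le_of_mul_le_mul_right (by linarith [h.c_le_b, h.b_le_a, h.a_le]) hc

theorem one_div_sq_le (h : IsPinched r a b c) (hc : 0 < c) :
    1 / r ^ 2 ≤ su2Y a b c * su2Z a b c / (b * c) ^ 2 := by
  have hr : 0 < r := zero_lt_one.trans_le (h.one_le hc)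
  have hb : 0 < b := hc.trans_le h.c_le_b
  have hY := sq_le_neg_su2Y hc.le h.c_le_b h.b_le_a
  have hZ := sq_le_neg_su2Z hc.le h.c_le_b h.b_le_a
  calc 1 / r ^ 2 = c ^ 2 * c ^ 2 / (r * c * c) ^ 2 := by field_simp
    _ ≤ -su2Y a b c * -su2Z a b c / (b * c) ^ 2 := by
      gcongr
      · exact mul_nonneg ((sq_nonneg c).trans hY) ((sq_nonneg c).trans hZ)
      · exact (sq_nonneg c).trans hY
      · exact h.b_le_a.trans h.a_le
    _ = su2Y a b c * su2Z a b c / (b * c) ^ 2 := by rw [neg_mul_neg]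

theorem le_nine_mul_pow (h : IsPinched r a b c) (hc : 0 < c) :
    su2Y a b c * su2Z a b c / (b * c) ^ 2 ≤ 9 * r ^ 4 := by
  have ha : 0 < a := hc.trans_le (h.c_le_b.trans h.b_le_a)
  have hZ : 0 ≤ -su2Z a b c := (sq_nonneg c).trans (sq_le_neg_su2Z hc.le h.c_le_b h.b_le_a)
  calc su2Y a b c * su2Z a b c / (b * c) ^ 2
      = -su2Y a b c * -su2Z a b c / (b * c) ^ 2 := by rw [neg_mul_neg]
    _ ≤ (3 * a ^ 2) * (3 * a ^ 2) / (c * c) ^ 2 := by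
      gcongr
      · exact neg_su2Y_le hc.le h.c_le_b h.b_le_a
      · exact neg_su2Z_le hc.le h.c_le_b h.b_le_a
      · exact h.c_le_b
    _ = 9 * a ^ 4 / c ^ 4 := by ring
    _ ≤ 9 * (r * c) ^ 4 / c ^ 4 := by gcongr; exact h.a_le
    _ = 9 * r ^ 4 := by field_simp

end IsPinched

end Algebra

namespace IsSolSU2

variable {A B C : ℝ → ℝ} {s : Set ℝ} {r t t₀ x y : ℝ}

theorem rotate (h : IsSolSU2 A B C s) : IsSolSU2 B C A s := fun t ht => by
  obtain ⟨⟨hApos, hBpos, hCpos⟩, hA, hB, hC⟩ := h t ht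
  have hprod : B t * C t * A t = A t * B t * C t := by ring
  rw [su2X_rotate (A t) (B t) (C t), su2Y_rotate (A t) (B t) (C t), su2Z_rotate (A t) (B t) (C t),
    hprod]
  exact ⟨⟨hBpos, hCpos, hApos⟩, hB, hC, hA⟩

theorem continuousOn (h : IsSolSU2 A B C s) : ContinuousOn A s :=
  HasDerivAt.continuousOn fun t ht => (h t ht).2.1

theorem hasDerivAt_sub (h : IsSolSU2 A B C s) (ht : t ∈ s) :
    HasDerivAt (fun t => A t - B t)
      (2 * su2Z (A t) (B t) (C t) * ((A t + B t - C t) ^ 2 + 4 * A t * B t) /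
        (A t * B t * C t) ^ 2 * (A t - B t)) t := by
  obtain ⟨-, hA, hB, -⟩ := h t ht
  refine (hA.sub hB).congr_deriv ?_
  linear_combination (-2 * su2Z (A t) (B t) (C t) / (A t * B t * C t) ^ 2) *
    mul_su2Y_sub_mul_su2X (A t) (B t) (C t)

theorem le_of_le (h : IsSolSU2 A B C s) (hs : s.OrdConnected) (ht₀ : t₀ ∈ s) (ht : t ∈ s)
    (hle : t₀ ≤ t) (hBA : B t₀ ≤ A t₀) : B t ≤ A t := by
  have hsub : Icc t₀ t ⊆ s := hs.out ht₀ ht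
  have hA : ContinuousOn A (Icc t₀ t) := h.continuousOn.mono hsub
  have hB : ContinuousOn B (Icc t₀ t) := h.rotate.continuousOn.mono hsub
  have hC : ContinuousOn C (Icc t₀ t) := h.rotate.rotate.continuousOn.mono hsub
  refine sub_nonneg.1 (nonneg_of_hasDerivAt_mul_self (u := fun x => A x - B x) hle ?_
    (fun x hx => h.hasDerivAt_sub (hsub hx)) (sub_nonneg.2 hBA))
  unfold su2Z
  refine ContinuousOn.div (by fun_prop) (by fun_prop) fun x hx => ?_
  obtain ⟨⟨hApos, hBpos, hCpos⟩, -⟩ := h x (hsub hx)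
  positivity

theorem hasDerivAt_div (h : IsSolSU2 A B C s) (ht : t ∈ s) :
    HasDerivAt (fun t => A t / C t)
      (8 * (A t / C t) * (A t - C t) * (A t + C t - B t) / (A t * B t * C t) ^ 2 *
        su2Y (A t) (B t) (C t)) t := by
  obtain ⟨⟨hApos, hBpos, hCpos⟩, hA, -, hC⟩ := h t ht
  refine (hA.div hC hCpos.ne').congr_deriv ?_
  field_simp
  linear_combination 2 * su2Y (A t) (B t) (C t) * su2X_sub_su2Z (A t) (B t) (C t)

theorem antitoneOn_div (h : IsSolSU2 A B C s) (hs : s.OrdConnected)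
    (hCB : ∀ t ∈ s, C t ≤ B t) (hBA : ∀ t ∈ s, B t ≤ A t) :
    AntitoneOn (fun t => A t / C t) s := by
  refine antitoneOn_of_hasDerivWithinAt_nonpos hs.convex
    (HasDerivAt.continuousOn fun t ht => h.hasDerivAt_div ht)
    (fun t ht => (h.hasDerivAt_div (interior_subset ht)).hasDerivWithinAt) fun t ht => ?_
  obtain ⟨⟨hApos, hBpos, hCpos⟩, -⟩ := h t (interior_subset ht)
  have hCBt := hCB t (interior_subset ht)
  have hBAt := hBA t (interior_subset ht)
  have hY : su2Y (A t) (B t) (C t) ≤ 0 :=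
    neg_nonneg.1 ((sq_nonneg _).trans (sq_le_neg_su2Y hCpos.le hCBt hBAt))
  have hAC : 0 ≤ A t - C t := by linarith
  have hACB : 0 ≤ A t + C t - B t := by linarith
  exact mul_nonpos_of_nonneg_of_nonpos (by positivity) hY

theorem isPinched_of_le (h : IsSolSU2 A B C s) (hs : s.OrdConnected) (ht₀ : t₀ ∈ s) (ht : t ∈ s)
    (hle : t₀ ≤ t) (h₀ : IsPinched r (A t₀) (B t₀) (C t₀)) : IsPinched r (A t) (B t) (C t) := by
  have hsub : Icc t₀ t ⊆ s := hs.out ht₀ ht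
  have hCB : ∀ x ∈ Icc t₀ t, C x ≤ B x := fun x hx =>
    h.rotate.le_of_le hs ht₀ (hsub hx) hx.1 h₀.c_le_b
  have hBA : ∀ x ∈ Icc t₀ t, B x ≤ A x := fun x hx =>
    h.le_of_le hs ht₀ (hsub hx) hx.1 h₀.b_le_a
  have hdiv : A t / C t ≤ r :=
    (antitoneOn_div (fun x hx => h x (hsub hx)) ordConnected_Icc hCB hBA
      (left_mem_Icc.2 hle) (right_mem_Icc.2 hle) hle).trans
      ((div_le_iff₀ (h t₀ ht₀).1.2.2).2 h₀.a_le)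
  exact ⟨hCB t (right_mem_Icc.2 hle), hBA t (right_mem_Icc.2 hle),
    (div_le_iff₀ (h t ht).1.2.2).1 hdiv⟩

theorem hasDerivAt_sq (h : IsSolSU2 A B C s) (ht : t ∈ s) :
    HasDerivAt (fun t => A t ^ 2)
      (-4 * (su2Y (A t) (B t) (C t) * su2Z (A t) (B t) (C t) / (B t * C t) ^ 2)) t := by
  obtain ⟨⟨hApos, hBpos, hCpos⟩, hA, -⟩ := h t ht
  refine (hA.pow 2).congr_deriv ?_
  field_simp
  ring

theorem deriv_sq_le (h : IsSolSU2 A B C s) (ht : t ∈ s) (hp : IsPinched r (A t) (B t) (C t)) :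
    deriv (fun t => A t ^ 2) t ≤ -4 / r ^ 2 := by
  rw [(h.hasDerivAt_sq ht).deriv, show -4 / r ^ 2 = -4 * (1 / r ^ 2) by ring]
  linarith [hp.one_div_sq_le (h t ht).1.2.2]

theorem le_deriv_sq (h : IsSolSU2 A B C s) (ht : t ∈ s) (hp : IsPinched r (A t) (B t) (C t)) :
    -36 * r ^ 4 ≤ deriv (fun t => A t ^ 2) t := by
  rw [(h.hasDerivAt_sq ht).deriv]
  linarith [hp.le_nine_mul_pow (h t ht).1.2.2]

section Pinched

variable (h : IsSolSU2 A B C s) (hs : s.OrdConnected)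
  (hp : ∀ t ∈ s, IsPinched r (A t) (B t) (C t))
include h hs hp

theorem sq_sub_sq_le (hx : x ∈ s) (hy : y ∈ s) (hxy : x ≤ y) :
    A y ^ 2 - A x ^ 2 ≤ -4 / r ^ 2 * (y - x) :=
  hs.convex.image_sub_le_mul_sub_of_deriv_le (f := fun t => A t ^ 2)
    (h.continuousOn.pow 2)
    (fun _ ht =>
      (h.hasDerivAt_sq (interior_subset ht)).differentiableAt.differentiableWithinAt)
    (fun t ht => h.deriv_sq_le (interior_subset ht) (hp t (interior_subset ht))) x hx y hy hxy

theorem le_sq_sub_sq (hx : x ∈ s) (hy : y ∈ s) (hxy : x ≤ y) :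
    -36 * r ^ 4 * (y - x) ≤ A y ^ 2 - A x ^ 2 :=
  hs.convex.mul_sub_le_image_sub_of_le_deriv (f := fun t => A t ^ 2)
    (h.continuousOn.pow 2)
    (fun _ ht =>
      (h.hasDerivAt_sq (interior_subset ht)).differentiableAt.differentiableWithinAt)
    (fun t ht => h.le_deriv_sq (interior_subset ht) (hp t (interior_subset ht))) x hx y hy hxy

theorem antitoneOn : AntitoneOn A s := fun x hx y hy hxy => by
  refine (sq_le_sq₀ (h y hy).1.1.le (h x hx).1.1.le).1 (sub_nonpos.1 ?_)
  refine (h.sq_sub_sq_le hs hp hx hy hxy).trans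
    (mul_nonpos_of_nonpos_of_nonneg ?_ (sub_nonneg.2 hxy))
  exact div_nonpos_of_nonpos_of_nonneg (by norm_num) (sq_nonneg r)

theorem sub_lt (hx : x ∈ s) (hy : y ∈ s) (hxy : x ≤ y) : y - x < r ^ 2 * A x ^ 2 / 4 := by
  have hr : 0 < r := zero_lt_one.trans_le ((hp x hx).one_le (h x hx).1.2.2)
  have hAy : 0 < A y ^ 2 := pow_pos (h y hy).1.1 2
  have hlt : 4 / r ^ 2 * (y - x) < A x ^ 2 := by
    have hle := h.sq_sub_sq_le hs hp hx hy hxy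
    rw [neg_div, neg_mul] at hle
    linarith
  calc y - x = r ^ 2 * (4 / r ^ 2 * (y - x)) / 4 := by field_simp
    _ < r ^ 2 * A x ^ 2 / 4 := by gcongr

end Pinched

theorem ordConnected_setOf_coe_lt (T : EReal) : {t : ℝ | 0 ≤ t ∧ (t : EReal) < T}.OrdConnected :=
  ⟨fun _ hx _ hy _ hz => ⟨hx.1.trans hz.1, (EReal.coe_le_coe_iff.2 hz.2).trans_lt hy.2⟩⟩

theorem exists_eq_coe {T : EReal} (h : IsSolSU2 A B C {t : ℝ | 0 ≤ t ∧ (t : EReal) < T})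
    (hT : 0 < T) (hp : ∀ t : ℝ, 0 ≤ t → (t : EReal) < T → IsPinched r (A t) (B t) (C t)) :
    ∃ T₀ : ℝ, 0 < T₀ ∧ T = T₀ := by
  have hTtop : T ≠ ⊤ := by
    rintro rfl
    have hmem : ∀ t : ℝ, 0 ≤ t → t ∈ {t : ℝ | 0 ≤ t ∧ (t : EReal) < ⊤} :=
      fun t ht => ⟨ht, EReal.coe_lt_top t⟩
    have hlt := h.sub_lt (ordConnected_setOf_coe_lt ⊤) (fun t ht => hp t ht.1 ht.2)
      (hmem 0 le_rfl) (hmem (r ^ 2 * A 0 ^ 2 / 4) (by positivity)) (by positivity)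
    exact (sub_zero (r ^ 2 * A 0 ^ 2 / 4) ▸ hlt).false
  lift T to ℝ using ⟨hTtop, (EReal.bot_lt_zero.trans hT).ne'⟩
  exact ⟨T, EReal.coe_pos.1 hT, rfl⟩

section Extinction

variable {T₀ : ℝ} (h : IsSolSU2 A B C (Ico 0 T₀))
  (hp : ∀ t ∈ Ico 0 T₀, IsPinched r (A t) (B t) (C t)) (hA : Tendsto A (𝓝[<] T₀) (𝓝 0))
include h hp hA

theorem sq_le_of_tendsto_zero (ht : t ∈ Ico 0 T₀) : A t ^ 2 ≤ 36 * r ^ 4 * (T₀ - t) := by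
  have hlim : Tendsto (fun y => A y ^ 2 + 36 * r ^ 4 * (y - t)) (𝓝[<] T₀)
      (𝓝 (0 ^ 2 + 36 * r ^ 4 * (T₀ - t))) :=
    (hA.pow 2).add (((continuous_id.sub continuous_const).const_mul _).continuousWithinAt)
  have hle : A t ^ 2 ≤ 0 ^ 2 + 36 * r ^ 4 * (T₀ - t) := by
    refine ge_of_tendsto hlim ?_
    filter_upwards [Ico_mem_nhdsLT ht.2] with y hy
    linarith [h.le_sq_sub_sq ordConnected_Ico hp ht ⟨ht.1.trans hy.1, hy.2⟩ hy.1]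
  linarith

theorem le_sq_of_tendsto_zero (ht : t ∈ Ico 0 T₀) : 4 / r ^ 2 * (T₀ - t) ≤ A t ^ 2 := by
  have hlim : Tendsto (fun y => A y ^ 2 + 4 / r ^ 2 * (y - t)) (𝓝[<] T₀)
      (𝓝 (0 ^ 2 + 4 / r ^ 2 * (T₀ - t))) :=
    (hA.pow 2).add (((continuous_id.sub continuous_const).const_mul _).continuousWithinAt)
  have hle : 0 ^ 2 + 4 / r ^ 2 * (T₀ - t) ≤ A t ^ 2 := by
    refine le_of_tendsto hlim ?_
    filter_upwards [Ico_mem_nhdsLT ht.2] with y hy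
    have hinc := h.sq_sub_sq_le ordConnected_Ico hp ht ⟨ht.1.trans hy.1, hy.2⟩ hy.1
    rw [neg_div, neg_mul] at hinc
    linarith
  linarith

theorem le_sqrt_mul_sq (ht : t ∈ Ico 0 T₀) : A t ≤ √(36 * (T₀ - t)) * r ^ 2 := by
  have hTt : 0 ≤ 36 * (T₀ - t) := by linarith [ht.2]
  refine le_of_sq_le_sq ?_ (by positivity)
  rw [mul_pow, Real.sq_sqrt hTt]
  linarith [h.sq_le_of_tendsto_zero hp hA ht]

theorem two_mul_sqrt_div_le (ht : t ∈ Ico 0 T₀) : 2 * √(T₀ - t) / r ≤ A t := by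
  refine le_of_sq_le_sq ?_ (h t ht).1.1.le
  rw [div_pow, mul_pow, Real.sq_sqrt (sub_nonneg.2 ht.2.le)]
  calc 2 ^ 2 * (T₀ - t) / r ^ 2 = 4 / r ^ 2 * (T₀ - t) := by ring
    _ ≤ A t ^ 2 := h.le_sq_of_tendsto_zero hp hA ht

end Extinction

end IsSolSU2

/-- The open octant of positive triples, the phase space of the flow. -/
def posOctant : Set (ℝ × ℝ × ℝ) := Ioi 0 ×ˢ Ioi 0 ×ˢ Ioi 0

theorem isOpen_posOctant : IsOpen posOctant :=
  isOpen_Ioi.prod (isOpen_Ioi.prod isOpen_Ioi)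

/-- The vector field of the flow on triples `(A, B, C)`. It is defined on all of `ℝ³`, but
meaningful only off the coordinate planes, where the denominator vanishes. -/
noncomputable def su2Field (p : ℝ × ℝ × ℝ) : ℝ × ℝ × ℝ :=
  (-2 * p.1 * su2Y p.1 p.2.1 p.2.2 * su2Z p.1 p.2.1 p.2.2 / (p.1 * p.2.1 * p.2.2) ^ 2,
   -2 * p.2.1 * su2Z p.1 p.2.1 p.2.2 * su2X p.1 p.2.1 p.2.2 / (p.1 * p.2.1 * p.2.2) ^ 2,
   -2 * p.2.2 * su2X p.1 p.2.1 p.2.2 * su2Y p.1 p.2.1 p.2.2 / (p.1 * p.2.1 * p.2.2) ^ 2)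

theorem contDiffAt_su2Field {p : ℝ × ℝ × ℝ} (hp : p ∈ posOctant) : ContDiffAt ℝ 1 su2Field p := by
  have hne : (p.1 * p.2.1 * p.2.2) ^ 2 ≠ 0 :=
    pow_ne_zero 2 (mul_pos (mul_pos hp.1 hp.2.1) hp.2.2).ne'
  unfold su2Field su2X su2Y su2Z
  refine ContDiffAt.prodMk ?_ (ContDiffAt.prodMk ?_ ?_) <;>
    exact ContDiffAt.div (by fun_prop) (by fun_prop) hne

theorem isSolSU2_iff_hasDerivAt_su2Field {γ : ℝ → ℝ × ℝ × ℝ} {s : Set ℝ} :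
    IsSolSU2 (fun t => (γ t).1) (fun t => (γ t).2.1) (fun t => (γ t).2.2) s ↔
      MapsTo γ s posOctant ∧ ∀ t ∈ s, HasDerivAt γ (su2Field (γ t)) t := by
  refine ⟨fun h => ⟨fun t ht => (h t ht).1, fun t ht => ?_⟩,
    fun h t ht => ⟨h.1 ht, (h.2 t ht).fst, (h.2 t ht).snd.fst, (h.2 t ht).snd.snd⟩⟩
  obtain ⟨-, hA, hB, hC⟩ := h t ht
  exact hA.prodMk (hB.prodMk hC)

namespace IsMaxSolSU2

variable {A B C : ℝ → ℝ} {r T₀ : ℝ}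

theorem setOf_coe_lt_coe (T₀ : ℝ) : {t : ℝ | 0 ≤ t ∧ (t : EReal) < T₀} = Ico 0 T₀ := by
  ext t
  simp only [mem_ofPred_eq, EReal.coe_lt_coe_iff, mem_Ico]

theorem isSolSU2_Ico (hmax : IsMaxSolSU2 A B C T₀) : IsSolSU2 A B C (Ico 0 T₀) :=
  setOf_coe_lt_coe T₀ ▸ hmax.1

theorem exists_notMem_of_isCompact (hmax : IsMaxSolSU2 A B C T₀) (hT₀ : 0 < T₀)
    {K : Set (ℝ × ℝ × ℝ)} (hK : IsCompact K) (hKpos : K ⊆ posOctant) :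
    ∃ t ∈ Ico 0 T₀, (A t, B t, C t) ∉ K := by
  by_contra! hmem
  set γ : ℝ → ℝ × ℝ × ℝ := fun t => (A t, B t, C t)
  obtain ⟨hγpos, hγ⟩ := isSolSU2_iff_hasDerivAt_su2Field (γ := γ).1 hmax.isSolSU2_Ico
  obtain ⟨p, hpK, hp⟩ := exists_mem_tendsto_nhdsLT_of_isCompact hT₀ hK
    (fun q hq => (contDiffAt_su2Field (hKpos hq)).continuousAt.continuousWithinAt) hγ hmem
  obtain ⟨β, c, hc, hβγ, hβpos, hβ⟩ := exists_extension_of_tendsto_nhdsLT hT₀ hγ hp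
    (contDiffAt_su2Field (hKpos hpK)) (isOpen_posOctant.mem_nhds (hKpos hpK))
  have hβpos' : MapsTo β (Ico 0 c) posOctant := fun t ht => by
    rcases lt_or_ge t T₀ with htT₀ | hT₀t
    · exact hβγ htT₀ ▸ hγpos ⟨ht.1, htT₀⟩
    · exact hβpos ⟨hT₀t, ht.2⟩
  refine hmax.2 (fun t => (β t).1) (fun t => (β t).2.1) (fun t => (β t).2.2) c
    (EReal.coe_lt_coe_iff.2 hc) ?_ fun t _ ht => ?_
  · rw [setOf_coe_lt_coe]
    exact isSolSU2_iff_hasDerivAt_su2Field.2 ⟨hβpos', hβ⟩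
  · rw [hβγ (EReal.coe_lt_coe_iff.1 ht)]
    exact ⟨rfl, rfl, rfl⟩

variable (hmax : IsMaxSolSU2 A B C T₀) (hT₀ : 0 < T₀)
  (hp : ∀ t ∈ Ico 0 T₀, IsPinched r (A t) (B t) (C t))
include hmax hT₀ hp

theorem exists_lt {e : ℝ} (he : 0 < e) : ∃ t ∈ Ico 0 T₀, A t < e := by
  have hsol := hmax.isSolSU2_Ico
  have h0 : (0 : ℝ) ∈ Ico 0 T₀ := ⟨le_rfl, hT₀⟩
  have hr : 0 < r := zero_lt_one.trans_le ((hp 0 h0).one_le (hsol 0 h0).1.2.2)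
  have hm : 0 < e / r := div_pos he hr
  obtain ⟨t, ht, hnotMem⟩ := hmax.exists_notMem_of_isCompact hT₀
    (K := Icc (e / r) (A 0) ×ˢ Icc (e / r) (A 0) ×ˢ Icc (e / r) (A 0))
    (isCompact_Icc.prod (isCompact_Icc.prod isCompact_Icc))
    (fun q hq => ⟨hm.trans_le hq.1.1, hm.trans_le hq.2.1.1, hm.trans_le hq.2.2.1⟩)
  refine ⟨t, ht, ?_⟩
  by_contra! hle
  obtain ⟨hCB, hBA, hAC⟩ := hp t ht
  have hC : e / r ≤ C t := (div_le_iff₀' hr).2 (hle.trans hAC)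
  have hA : A t ≤ A 0 := hsol.antitoneOn ordConnected_Ico hp h0 ht ht.1
  refine hnotMem ⟨⟨?_, ?_⟩, ⟨?_, ?_⟩, ⟨?_, ?_⟩⟩ <;> linarith

theorem tendsto_zero :
    Tendsto A (𝓝[<] T₀) (𝓝 0) ∧ Tendsto B (𝓝[<] T₀) (𝓝 0) ∧ Tendsto C (𝓝[<] T₀) (𝓝 0) := by
  have hsol := hmax.isSolSU2_Ico
  have hA : Tendsto A (𝓝[<] T₀) (𝓝 0) :=
    tendsto_nhdsLT_of_antitoneOn_of_forall_exists_lt hT₀ (hsol.antitoneOn ordConnected_Ico hp)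
      (fun t ht => (hsol t ht).1.1.le) fun e he => hmax.exists_lt hT₀ hp he
  have hB : Tendsto B (𝓝[<] T₀) (𝓝 0) := by
    refine squeeze_zero' ?_ ?_ hA <;> filter_upwards [Ico_mem_nhdsLT hT₀] with t ht
    exacts [(hsol t ht).1.2.1.le, (hp t ht).b_le_a]
  have hC : Tendsto C (𝓝[<] T₀) (𝓝 0) := by
    refine squeeze_zero' ?_ ?_ hB <;> filter_upwards [Ico_mem_nhdsLT hT₀] with t ht
    exacts [(hsol t ht).1.2.2.le, (hp t ht).c_le_b]
  exact ⟨hA, hB, hC⟩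

end IsMaxSolSU2

/-- For a maximal positive solution of the `SU(2)` negative cross curvature flow with
`A0 ≥ B0 ≥ C0 > 0`: one has `d(A²)/dt ≤ -4C0²/A0²` along the flow, hence the solution
exists only up to a finite time `T0 > 0`, with `A, B, C → 0` as `t → T0⁻` and
`√(48(T0 - t))·A0²/C0² ≥ A(t) ≥ 2√(T0 - t)·C0/A0` on `[0, T0)`. -/
theorem su2_finite_time_extinction
    (A0 B0 C0 : ℝ) (hC0 : 0 < C0) (hBC0 : B0 ≥ C0) (hAB0 : A0 ≥ B0)
    (A B C : ℝ → ℝ) (T : EReal) (hT : 0 < T)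
    (hmax : IsMaxSolSU2 A B C T)
    (hinitA : A 0 = A0) (hinitB : B 0 = B0) (hinitC : C 0 = C0) :
    (∀ t : ℝ, 0 ≤ t → (t : EReal) < T →
      deriv (fun s => A s ^ 2) t ≤ -4 * C0 ^ 2 / A0 ^ 2) ∧
    ∃ T0 : ℝ, 0 < T0 ∧ T = (T0 : EReal) ∧
      Filter.Tendsto A (nhdsWithin T0 (Set.Iio T0)) (nhds 0) ∧
      Filter.Tendsto B (nhdsWithin T0 (Set.Iio T0)) (nhds 0) ∧
      Filter.Tendsto C (nhdsWithin T0 (Set.Iio T0)) (nhds 0) ∧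
      ∀ t : ℝ, 0 ≤ t → t < T0 →
        Real.sqrt (48 * (T0 - t)) * A0 ^ 2 / C0 ^ 2 ≥ A t ∧
        A t ≥ 2 * Real.sqrt (T0 - t) * C0 / A0 := by
  have hA0 : 0 < A0 := by linarith
  have hpinched : ∀ t : ℝ, 0 ≤ t → (t : EReal) < T → IsPinched (A0 / C0) (A t) (B t) (C t) := by
    refine fun t ht htT => hmax.1.isPinched_of_le (IsSolSU2.ordConnected_setOf_coe_lt T)
      ⟨le_rfl, hT⟩ ⟨ht, htT⟩ ht ?_
    rw [hinitA, hinitB, hinitC]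
    exact ⟨hBC0, hAB0, (div_mul_cancel₀ A0 hC0.ne').ge⟩
  refine ⟨fun t ht htT => ?_, ?_⟩
  · calc deriv (fun s => A s ^ 2) t ≤ -4 / (A0 / C0) ^ 2 :=
          hmax.1.deriv_sq_le ⟨ht, htT⟩ (hpinched t ht htT)
      _ = -4 * C0 ^ 2 / A0 ^ 2 := by field_simp
  obtain ⟨T0, hT0, rfl⟩ := hmax.1.exists_eq_coe hT hpinched
  have hp : ∀ t ∈ Ico 0 T0, IsPinched (A0 / C0) (A t) (B t) (C t) :=
    fun t ht => hpinched t ht.1 (EReal.coe_lt_coe_iff.2 ht.2)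
  obtain ⟨hA, hB, hC⟩ := hmax.tendsto_zero hT0 hp
  refine ⟨T0, hT0, rfl, hA, hB, hC, fun t ht htT => ⟨?_, ?_⟩⟩
  · calc A t ≤ √(36 * (T0 - t)) * (A0 / C0) ^ 2 :=
          hmax.isSolSU2_Ico.le_sqrt_mul_sq hp hA ⟨ht, htT⟩
      _ ≤ √(48 * (T0 - t)) * (A0 / C0) ^ 2 := by
        gcongr ?_ * _
        exact Real.sqrt_le_sqrt (by linarith)
      _ = √(48 * (T0 - t)) * A0 ^ 2 / C0 ^ 2 := by rw [div_pow, mul_div_assoc]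
  · calc 2 * √(T0 - t) * C0 / A0 = 2 * √(T0 - t) / (A0 / C0) := by rw [div_div_eq_mul_div]
      _ ≤ A t := hmax.isSolSU2_Ico.two_mul_sqrt_div_le hp hA ⟨ht, htT⟩
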